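/- Let G=(V,E) be a 3-edge-connected cubic graph, and let X ⊆ V be such that the induced subgraph G[X] is connected. Let H be a component of G − X and let P ⊆ H be a nontrivial path with ends y₁, y₂. If P is peripheral in H, E(y_i, X) ≠ ∅ for i = 1, 2, and E(y, X) = ∅ for every other vertex y of P, then there exists a peripheral cycle C of G with C ∩ H = P. -/

import Mathlib

open scoped Classical

/-- A multigraph with an orientation: each edge `e` has a source `src e` and a target `tgt e`.
Loops and parallel edges are allowed. -/
structure Multigraph (V E : Type) where
  src : E → V
  tgt : E → V

namespace Multigraph

variable {V E : Type}

/-- `u` and `v` are joined by some edge satisfying the predicate `P`. -/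
def adjVia (G : Multigraph V E) (P : E → Prop) (u v : V) : Prop :=
  ∃ e, P e ∧ ((G.src e = u ∧ G.tgt e = v) ∨ (G.src e = v ∧ G.tgt e = u))

/-- `v` is reachable from `u` using only edges satisfying `P`. -/
def Reaches (G : Multigraph V E) (P : E → Prop) : V → V → Prop :=
  Relation.ReflTransGen (G.adjVia P)

/-- The graph is connected when only edges satisfying `P` are kept (all edges deleted
whose predicate fails, all vertices kept). -/
def ConnectedVia (G : Multigraph V E) (P : E → Prop) : Prop :=
  Nonempty V ∧ ∀ u v : V, G.Reaches P u v

def Connected (G : Multigraph V E) : Prop :=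
  G.ConnectedVia fun _ => True

/-- `G` is `k`-edge-connected: it is connected and has no edge cut of size less than `k`;
equivalently, deleting any set of fewer than `k` edges leaves it connected. -/
def EdgeConnected (G : Multigraph V E) (k : ℕ) : Prop :=
  ∀ S : Set E, S.ncard < k → G.ConnectedVia fun e => e ∉ S

/-- The degree of a vertex (loops counted twice). -/
noncomputable def degree (G : Multigraph V E) (v : V) : ℕ :=
  {e | G.src e = v}.ncard + {e | G.tgt e = v}.ncard

/-- Every vertex has degree exactly 3. -/
def Cubic (G : Multigraph V E) : Prop :=
  ∀ v : V, G.degree v = 3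

/-- `φ : E → Γ` is a flow: at every vertex, the sum over outgoing edges equals the
sum over incoming edges. -/
def IsFlow [Fintype E] {Γ : Type} [AddCommGroup Γ] (G : Multigraph V E) (φ : E → Γ) : Prop :=
  ∀ v : V, (∑ e : E, if G.src e = v then φ e else 0) = ∑ e : E, if G.tgt e = v then φ e else 0

/-- The vertex `v` is an endpoint of some edge of `C`. -/
def touches (G : Multigraph V E) (C : Set E) (v : V) : Prop :=
  ∃ e ∈ C, G.src e = v ∨ G.tgt e = v

/-- An edge set `C` is (the edge set of) a cycle: it is nonempty, every vertex it touches
has degree exactly 2 in it, and it is connected. -/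
def IsCycle (G : Multigraph V E) (C : Set E) : Prop :=
  C.Nonempty ∧
  (∀ v : V, G.touches C v →
    ({e ∈ C | G.src e = v}.ncard + {e ∈ C | G.tgt e = v}.ncard = 2)) ∧
  (∀ u v : V, G.touches C u → G.touches C v → G.Reaches (· ∈ C) u v)

/-- `R` is `k`-closed: every cycle with at least one edge outside `R` has at least
`k+1` edges outside `R`. -/
def Closed (G : Multigraph V E) (k : ℕ) (R : Set E) : Prop :=
  ∀ C : Set E, G.IsCycle C → (C \ R).Nonempty → k + 1 ≤ (C \ R).ncard

/-- The `k`-closure `⟨S⟩ₖ` of `S` : the minimal `k`-closed set containing `S`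
(the family of `k`-closed sets is closed under intersections). -/
def kClosure (G : Multigraph V E) (k : ℕ) (S : Set E) : Set E :=
  ⋂₀ {R : Set E | S ⊆ R ∧ G.Closed k R}

/-- `S` is a `k`-base: its `k`-closure is the whole edge set. -/
def IsBase (G : Multigraph V E) (k : ℕ) (S : Set E) : Prop :=
  G.kClosure k S = Set.univ

/-- An edge set `S` is peripheral if `G − S` is connected. -/
def Peripheral (G : Multigraph V E) (S : Set E) : Prop :=
  G.ConnectedVia fun e => e ∉ S

/-- The spanning subgraph `(V, F)` is a forest, i.e. contains no cycle. -/
def IsForest (G : Multigraph V E) (F : Set E) : Prop :=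
  ∀ C : Set E, G.IsCycle C → ¬ C ⊆ F

/-- `vs`, `es` describe a path: distinct vertices `vs 0, …, vs n` and distinct edges
`es 0, …, es (n-1)` where `es i` joins `vs i` and `vs (i+1)`. -/
def IsPath (G : Multigraph V E) {n : ℕ} (vs : Fin (n + 1) → V) (es : Fin n → E) : Prop :=
  Function.Injective vs ∧ Function.Injective es ∧
  ∀ i : Fin n,
    (G.src (es i) = vs i.castSucc ∧ G.tgt (es i) = vs i.succ) ∨
    (G.src (es i) = vs i.succ ∧ G.tgt (es i) = vs i.castSucc)

/-- The edge `e` has `y` as one endpoint and its other endpoint in `X`,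
i.e. `e ∈ E(y, X)`. -/
def joins (G : Multigraph V E) (e : E) (y : V) (X : Set V) : Prop :=
  (G.src e = y ∧ G.tgt e ∈ X) ∨ (G.tgt e = y ∧ G.src e ∈ X)

/-- `W` is the vertex set of a connected component of `G − X`. -/
def IsComponent (G : Multigraph V E) (X W : Set V) : Prop :=
  W.Nonempty ∧ Disjoint W X ∧
  (∀ u ∈ W, ∀ v : V, v ∉ X → G.adjVia (fun _ => True) u v → v ∈ W) ∧
  (∀ u ∈ W, ∀ v ∈ W, G.Reaches (fun e => G.src e ∉ X ∧ G.tgt e ∉ X) u v)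

/-- The subgraph induced on `W`, with only those of its edges satisfying `P` kept,
is connected. -/
def ConnectedOn (G : Multigraph V E) (W : Set V) (P : E → Prop) : Prop :=
  ∀ u ∈ W, ∀ v ∈ W, G.Reaches (fun e => P e ∧ G.src e ∈ W ∧ G.tgt e ∈ W) u v

/-- The subgraph induced on `W` is `k`-edge-connected. -/
def EdgeConnectedOn (G : Multigraph V E) (W : Set V) (k : ℕ) : Prop :=
  ∀ S : Set E, S.ncard < k → G.ConnectedOn W fun e => e ∉ S

/-- Some cycle lies entirely inside the vertex set `X`. -/
def HasCycleIn (G : Multigraph V E) (X : Set V) : Prop :=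
  ∃ C : Set E, G.IsCycle C ∧ ∀ e ∈ C, G.src e ∈ X ∧ G.tgt e ∈ X

/-- The edge cut `E(X, V \ X)`. -/
def cutEdges (G : Multigraph V E) (X : Set V) : Set E :=
  {e | (G.src e ∈ X ∧ G.tgt e ∉ X) ∨ (G.src e ∉ X ∧ G.tgt e ∈ X)}

/-- A cubic graph is cyclically `k`-edge-connected if every edge cut separating two
cycle-containing parts has at least `k` edges. -/
def CyclicallyEdgeConnected (G : Multigraph V E) (k : ℕ) : Prop :=
  ∀ X : Set V, G.HasCycleIn X → G.HasCycleIn Xᶜ → k ≤ (G.cutEdges X).ncard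

/-- `G` is 3-connected: more than 3 vertices, connected, and still connected after
deleting any two vertices. -/
def ThreeConnected [Fintype V] (G : Multigraph V E) : Prop :=
  3 < Fintype.card V ∧ G.Connected ∧
    ∀ u v : V, G.ConnectedOn {w : V | w ≠ u ∧ w ≠ v} fun _ => True

/-- The graph `G − r` obtained by deleting the vertex `r` and all incident edges. -/
def deleteVertex (G : Multigraph V E) (r : V) :
    Multigraph {v : V // v ≠ r} {e : E // G.src e ≠ r ∧ G.tgt e ≠ r} where
  src e := ⟨G.src e.1, e.2.1⟩
  tgt e := ⟨G.tgt e.1, e.2.2⟩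

end Multigraph

/-!
A link is a set of edges outside `H` joining `y₁` to `y₂`; one exists because `G[X]` is connected.
Given a link `Q`, let `B` be the component of `G − (P ∪ Q)` containing `H`, and choose `Q` with
`B` maximal. If `B` misses a vertex, let `S` be a component of `G − B`. All edges of the cut of `S`
lie in `Q`, and there are at least three of them. As `G[S]` is connected, `Q` can be rerouted
through `S` so as to use at most two of them; a released cut edge then joins `S` to `B`,
contradicting maximality. So `P ∪ Q` is peripheral, and replacing `Q` by a path in it closes `P` up
to a peripheral cycle.
-/

namespace Multigraph

variable {V E : Type} {G : Multigraph V E}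

section Incidence

variable {e : E} {u v w : V} {S T X : Set V}

/-- The edge `e` has ends `u` and `w`, in either orientation. This is spelled out so that it agrees
definitionally with the adjacency conditions in `adjVia` and `IsPath`. -/
def IsLink (G : Multigraph V E) (e : E) (u w : V) : Prop :=
  (G.src e = u ∧ G.tgt e = w) ∨ (G.src e = w ∧ G.tgt e = u)

/-- The edge set of the induced subgraph `G[S]`. -/
def inducedEdges (G : Multigraph V E) (S : Set V) : Set E :=
  {e | G.src e ∈ S ∧ G.tgt e ∈ S}

theorem IsLink.symm (h : G.IsLink e u w) : G.IsLink e w u :=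
  Or.symm h

theorem IsLink.mem_inducedEdges_iff (h : G.IsLink e u w) :
    e ∈ G.inducedEdges S ↔ u ∈ S ∧ w ∈ S := by
  rcases h with ⟨rfl, rfl⟩ | ⟨rfl, rfl⟩
  · exact Iff.rfl
  · exact and_comm

theorem IsLink.mem_cutEdges (h : G.IsLink e u w) (hu : u ∈ S) (hw : w ∉ S) :
    e ∈ G.cutEdges S := by
  rcases h with ⟨rfl, rfl⟩ | ⟨rfl, rfl⟩
  · exact Or.inl ⟨hu, hw⟩
  · exact Or.inr ⟨hw, hu⟩

theorem exists_isLink_of_mem_cutEdges (h : e ∈ G.cutEdges S) :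
    ∃ u ∈ S, ∃ w ∉ S, G.IsLink e u w := by
  rcases h with ⟨hs, ht⟩ | ⟨hs, ht⟩
  · exact ⟨_, hs, _, ht, Or.inl ⟨rfl, rfl⟩⟩
  · exact ⟨_, ht, _, hs, Or.inr ⟨rfl, rfl⟩⟩

theorem IsLink.eq_or_eq (h : G.IsLink e u w) (hv : G.src e = v ∨ G.tgt e = v) :
    v = u ∨ v = w := by
  rcases h with ⟨rfl, rfl⟩ | ⟨rfl, rfl⟩
  · exact hv.imp Eq.symm Eq.symm
  · exact hv.symm.imp Eq.symm Eq.symm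

theorem IsLink.incident (h : G.IsLink e u w) : G.src e = u ∨ G.tgt e = u :=
  h.imp And.left And.right

theorem joins.exists_isLink (h : G.joins e u X) : ∃ x ∈ X, G.IsLink e u x := by
  rcases h with ⟨hu, hx⟩ | ⟨hu, hx⟩
  · exact ⟨_, hx, Or.inl ⟨hu, rfl⟩⟩
  · exact ⟨_, hx, Or.inr ⟨rfl, hu⟩⟩

theorem joins.notMem_inducedEdges (h : G.joins e u X) (hSX : Disjoint S X) :
    e ∉ G.inducedEdges S := by
  obtain ⟨x, hx, he⟩ := h.exists_isLink
  exact fun hS => hSX.notMem_of_mem_left (he.mem_inducedEdges_iff.1 hS).2 hx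

theorem joins.eq_of_incident (h : G.joins e u X) (hSX : Disjoint S X) (hvS : v ∈ S)
    (hv : G.src e = v ∨ G.tgt e = v) : v = u := by
  obtain ⟨x, hx, he⟩ := h.exists_isLink
  exact (he.eq_or_eq hv).resolve_right fun hvx => hSX.notMem_of_mem_left hvS (hvx ▸ hx)

theorem inducedEdges_mono (h : S ⊆ T) : G.inducedEdges S ⊆ G.inducedEdges T :=
  fun _ he => ⟨h he.1, h he.2⟩

theorem notMem_of_incident_of_mem_inducedEdges_compl (hv : G.src e = v ∨ G.tgt e = v)
    (he : e ∈ G.inducedEdges Sᶜ) : v ∉ S := by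
  rcases hv with rfl | rfl
  exacts [he.1, he.2]

end Incidence

section Reachability

variable {P Q : E → Prop} {u v : V} {S : Set V}

theorem Reaches.symm (h : G.Reaches P u v) : G.Reaches P v u := by
  induction h with
  | refl => exact .refl
  | tail _ huv ih =>
    obtain ⟨e, he, huv⟩ := huv
    exact .head ⟨e, he, huv.symm⟩ ih

theorem Reaches.mono (hPQ : ∀ e, P e → Q e) (h : G.Reaches P u v) : G.Reaches Q u v :=
  Relation.ReflTransGen.mono (fun _ _ ⟨e, he, huv⟩ => ⟨e, hPQ e he, huv⟩) _ _ h

theorem Reaches.mem_of_forall_notMem_cutEdges (h : G.Reaches P u v) (hu : u ∈ S)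
    (hS : ∀ e, P e → e ∉ G.cutEdges S) : v ∈ S := by
  induction h with
  | refl => exact hu
  | tail _ huv ih =>
    obtain ⟨e, he, huv⟩ := huv
    by_contra hv
    exact hS e he (IsLink.mem_cutEdges huv ih hv)

theorem Reaches.within_of_forall_notMem_cutEdges (h : G.Reaches P u v) (hu : u ∈ S)
    (hS : ∀ e, P e → e ∉ G.cutEdges S) :
    G.Reaches (fun e => P e ∧ G.src e ∈ S ∧ G.tgt e ∈ S) u v := by
  induction h with
  | refl => exact .refl
  | tail huv hvw ih =>
    have hv := Reaches.mem_of_forall_notMem_cutEdges huv hu hS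
    have hw := Reaches.mem_of_forall_notMem_cutEdges (.tail huv hvw) hu hS
    obtain ⟨e, he, hvw⟩ := hvw
    exact ih.tail ⟨e, ⟨he, (IsLink.mem_inducedEdges_iff hvw).2 ⟨hv, hw⟩⟩, hvw⟩

/-- The vertex set of the component containing `u` of the spanning subgraph whose edges are those
satisfying `P`. -/
def reachSet (G : Multigraph V E) (P : E → Prop) (u : V) : Set V :=
  {v | G.Reaches P u v}

theorem notMem_cutEdges_reachSet {e : E} (he : P e) : e ∉ G.cutEdges (G.reachSet P u) := by
  intro hcut
  obtain ⟨v, hv, w, hw, hvw⟩ := exists_isLink_of_mem_cutEdges hcut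
  exact hw (hv.tail ⟨e, he, hvw⟩)

theorem Reaches.within_reachSet (h : G.Reaches P u v) :
    G.Reaches (fun e => P e ∧ G.src e ∈ G.reachSet P u ∧ G.tgt e ∈ G.reachSet P u) u v :=
  h.within_of_forall_notMem_cutEdges .refl fun _ => notMem_cutEdges_reachSet

theorem peripheral_of_forall_mem_reachSet {F : Set E} (h : ∀ v, v ∈ G.reachSet (· ∉ F) u) :
    G.Peripheral F :=
  ⟨⟨u⟩, fun v w => (h v).symm.trans (h w)⟩

theorem Peripheral.subset {F F' : Set E} (h : G.Peripheral F) (hF : F' ⊆ F) : G.Peripheral F' :=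
  ⟨h.1, fun u v => (h.2 u v).mono fun _ he he' => he (hF he')⟩

theorem EdgeConnected.le_encard_cutEdges {k : ℕ} (hG : G.EdgeConnected k) (hu : u ∈ S)
    (hv : v ∉ S) : k ≤ (G.cutEdges S).encard := by
  by_contra! hlt
  have hfin : (G.cutEdges S).Finite := Set.finite_of_encard_le_coe hlt.le
  have hcard : (G.cutEdges S).ncard < k := by
    rwa [← hfin.cast_ncard_eq, Nat.cast_lt] at hlt
  exact hv (((hG _ hcard).2 u v).mem_of_forall_notMem_cutEdges hu fun _ => id)

end Reachability

section Components

variable {B S X W : Set V} {u v : V}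

theorem exists_isComponent_mem (hv : v ∉ B) : ∃ S, v ∈ S ∧ G.IsComponent B S := by
  set S := G.reachSet (· ∈ G.inducedEdges Bᶜ) v
  have hSB : S ⊆ Bᶜ := fun s hs => hs.mem_of_forall_notMem_cutEdges hv <| by
    rintro e he (⟨-, ht⟩ | ⟨hs, -⟩)
    exacts [ht he.2, hs he.1]
  refine ⟨S, .refl, ⟨v, .refl⟩, Set.disjoint_left.2 hSB, ?_, fun s hs t ht => hs.symm.trans ht⟩
  rintro s hs t ht ⟨e, -, hst⟩
  exact hs.tail ⟨e, (IsLink.mem_inducedEdges_iff hst).2 ⟨hSB hs, ht⟩, hst⟩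

theorem IsComponent.mem_of_isLink {e : E} (h : G.IsComponent X W) (he : G.IsLink e u v)
    (hu : u ∈ W) (hv : v ∉ W) : v ∈ X := by
  by_contra hvX
  exact hv (h.2.2.1 u hu v hvX ⟨e, trivial, he⟩)

theorem IsComponent.connectedOn (h : G.IsComponent X W) : G.ConnectedOn W fun _ => True := by
  intro u hu v hv
  refine ((h.2.2.2 u hu v hv).within_of_forall_notMem_cutEdges hu ?_).mono
    fun _ he => ⟨trivial, he.2⟩
  intro e he hcut
  obtain ⟨s, hs, t, ht, hst⟩ := exists_isLink_of_mem_cutEdges hcut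
  have hX : e ∈ G.inducedEdges Xᶜ := he
  exact (hst.mem_inducedEdges_iff.1 hX).2 (h.mem_of_isLink hst hs ht)

end Components

section Linking

variable {S W X : Set V} {P Q : Set E} {y z : V}

theorem Reaches.avoids_cutEdges_or_enters (h : G.Reaches (· ∈ Q) y z) :
    G.Reaches (· ∈ Q \ G.cutEdges S) y z ∨
      ∃ f ∈ Q, ∃ s ∈ S, G.Reaches (· ∈ insert f (Q \ G.cutEdges S)) y s := by
  induction h with
  | refl => exact Or.inl .refl
  | @tail u v _ huv ih =>
    refine ih.elim (fun hu => ?_) Or.inr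
    obtain ⟨e, he, huv⟩ := huv
    by_cases hcut : e ∈ G.cutEdges S
    · have hu' : G.Reaches (· ∈ insert e (Q \ G.cutEdges S)) y u :=
        hu.mono fun _ => Set.mem_insert_of_mem _
      have hv' : G.Reaches (· ∈ insert e (Q \ G.cutEdges S)) y v :=
        hu'.tail ⟨e, Set.mem_insert _ _, huv⟩
      obtain ⟨s, hs, t, -, hst⟩ := exists_isLink_of_mem_cutEdges hcut
      rcases IsLink.eq_or_eq huv hst.incident with rfl | rfl
      exacts [Or.inr ⟨e, he, s, hs, hu'⟩, Or.inr ⟨e, he, s, hs, hv'⟩]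
    · exact Or.inl (hu.tail ⟨e, ⟨he, hcut⟩, huv⟩)

theorem Reaches.exists_reroute (hS : G.ConnectedOn S fun _ => True)
    (h : G.Reaches (· ∈ Q) y z) :
    ∃ D ⊆ Q, D.encard ≤ 2 ∧
      G.Reaches (· ∈ (Q \ G.cutEdges S) ∪ D ∪ G.inducedEdges S) y z := by
  rcases h.avoids_cutEdges_or_enters (S := S) with hyz | ⟨f, hf, s, hs, hys⟩
  · exact ⟨∅, Set.empty_subset _, by simp, hyz.mono fun e he => Or.inl (Or.inl he)⟩
  rcases h.symm.avoids_cutEdges_or_enters (S := S) with hzy | ⟨g, hg, t, ht, hzt⟩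
  · exact ⟨∅, Set.empty_subset _, by simp, hzy.symm.mono fun e he => Or.inl (Or.inl he)⟩
  refine ⟨{f, g}, Set.pair_subset hf hg, (Set.encard_insert_le {g} f).trans ?_, ?_⟩
  · rw [Set.encard_singleton]; rfl
  have hys' : G.Reaches (· ∈ (Q \ G.cutEdges S) ∪ {f, g} ∪ G.inducedEdges S) y s :=
    hys.mono (by grind)
  have hst : G.Reaches (· ∈ (Q \ G.cutEdges S) ∪ {f, g} ∪ G.inducedEdges S) s t :=
    (hS s hs t ht).mono fun _ he => Or.inr he.2
  have htz : G.Reaches (· ∈ (Q \ G.cutEdges S) ∪ {f, g} ∪ G.inducedEdges S) t z :=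
    hzt.symm.mono (by grind)
  exact (hys'.trans hst).trans htz

theorem Reaches.exists_reachSet_ssubset (hG : G.EdgeConnected 3) {v : V}
    (hP : P ⊆ G.inducedEdges (G.reachSet (· ∉ P ∪ Q) y)) (hQ : G.Reaches (· ∈ Q) y z)
    (hv : v ∉ G.reachSet (· ∉ P ∪ Q) y) :
    ∃ Q' ⊆ Q ∪ G.inducedEdges (G.reachSet (· ∉ P ∪ Q) y)ᶜ, G.Reaches (· ∈ Q') y z ∧
      G.reachSet (· ∉ P ∪ Q) y ⊂ G.reachSet (· ∉ P ∪ Q') y := by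
  set B := G.reachSet (· ∉ P ∪ Q) y
  obtain ⟨S, hvS, hS⟩ := exists_isComponent_mem (G := G) hv
  have hSB : S ⊆ Bᶜ := hS.2.1.subset_compl_right
  obtain ⟨D, hDQ, hD, hlink⟩ := hQ.exists_reroute hS.connectedOn
  refine ⟨(Q \ G.cutEdges S) ∪ D ∪ G.inducedEdges S,
    Set.union_subset_union (Set.union_subset Set.sdiff_subset hDQ) (inducedEdges_mono hSB),
    hlink, ?_⟩
  set Q' := (Q \ G.cutEdges S) ∪ D ∪ G.inducedEdges S
  have hB : B ⊆ G.reachSet (· ∉ P ∪ Q') y := by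
    refine fun u hu => hu.within_reachSet.mono ?_
    rintro e ⟨hePQ, heB, -⟩ (heP | (heQ | heD) | heS)
    exacts [hePQ (Or.inl heP), hePQ (Or.inr heQ.1), hePQ (Or.inr (hDQ heD)), hSB heS.1 heB]
  obtain ⟨f, hfS, hfD⟩ : ∃ f ∈ G.cutEdges S, f ∉ D := by
    have hcut : 3 ≤ (G.cutEdges S).encard :=
      hG.le_encard_cutEdges hvS fun hy => hSB hy .refl
    refine Set.not_subset.1 fun hsub => ?_
    exact absurd (hcut.trans ((Set.encard_le_encard hsub).trans hD)) (by decide)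
  obtain ⟨s, hs, b, hb, hsb⟩ := exists_isLink_of_mem_cutEdges hfS
  have hfP : f ∉ P := fun h => hSB hs (hsb.mem_inducedEdges_iff.1 (hP h)).1
  have hfQ' : f ∉ Q' := by
    rintro ((hfQ | hfD') | hfS')
    exacts [hfQ.2 hfS, hfD hfD', hb (hsb.mem_inducedEdges_iff.1 hfS').2]
  have hsB' : s ∈ G.reachSet (· ∉ P ∪ Q') y :=
    (hB (hS.mem_of_isLink hsb hs hb)).tail ⟨f, fun h => h.elim hfP hfQ', hsb.symm⟩
  exact ⟨hB, fun hB' => hSB hs (hB' hsB')⟩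

theorem EdgeConnected.exists_peripheral_link [Finite E] (hG : G.EdgeConnected 3) {M : Set E}
    (hy : y ∈ W) (hP : P ⊆ G.inducedEdges W) (hper : G.ConnectedOn W fun e => e ∉ P)
    (hWM : G.inducedEdges Wᶜ ⊆ M) (hMW : Disjoint M (G.inducedEdges W))
    (hyz : G.Reaches (· ∈ M) y z) :
    ∃ Q ⊆ M, G.Reaches (· ∈ Q) y z ∧ G.Peripheral (P ∪ Q) := by
  obtain ⟨Q, ⟨hQM, hQ⟩, hmax⟩ := Set.Finite.exists_maximalFor
    (fun Q => G.reachSet (· ∉ P ∪ Q) y) {Q | Q ⊆ M ∧ G.Reaches (· ∈ Q) y z} (Set.toFinite _)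
    ⟨M, subset_rfl, hyz⟩
  have hWB : W ⊆ G.reachSet (· ∉ P ∪ Q) y := fun w hw => (hper y hy w hw).mono fun e he =>
    not_or_intro he.1 fun heQ => hMW.notMem_of_mem_left (hQM heQ) he.2
  refine ⟨Q, hQM, hQ, peripheral_of_forall_mem_reachSet (u := y) ?_⟩
  by_contra! hne
  obtain ⟨v, hv⟩ := hne
  obtain ⟨Q', hQ', hlink, hlt⟩ :=
    hQ.exists_reachSet_ssubset hG (hP.trans (inducedEdges_mono hWB)) hv
  have hQ'M : Q' ⊆ M := hQ'.trans <| Set.union_subset hQM <|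
    (inducedEdges_mono (Set.compl_subset_compl.2 hWB)).trans hWM
  exact hlt.not_subset (hmax ⟨hQ'M, hlink⟩ hlt.subset)

theorem reaches_of_joins (hX : G.ConnectedOn X fun _ => True) {e₁ e₂ : E} (h₁ : G.joins e₁ y X)
    (h₂ : G.joins e₂ z X) : G.Reaches (· ∈ {e₁, e₂} ∪ G.inducedEdges X) y z := by
  obtain ⟨x₁, hx₁, hyx⟩ := h₁.exists_isLink
  obtain ⟨x₂, hx₂, hzx⟩ := h₂.exists_isLink
  have hx : G.Reaches (· ∈ {e₁, e₂} ∪ G.inducedEdges X) x₁ x₂ :=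
    (hX x₁ hx₁ x₂ hx₂).mono fun _ he => Or.inr he.2
  exact .head ⟨e₁, by simp, hyx⟩ (hx.tail ⟨e₂, by simp, hzx.symm⟩)

end Linking

section Degree

variable {F F' : Set E}

/-- The degree of `v` in the spanning subgraph with edge set `F` (loops counted twice). -/
noncomputable def degreeIn (G : Multigraph V E) (F : Set E) (v : V) : ℕ :=
  {e ∈ F | G.src e = v}.ncard + {e ∈ F | G.tgt e = v}.ncard

theorem degreeIn_empty (v : V) : G.degreeIn ∅ v = 0 := by
  simp [degreeIn]

theorem IsLink.degreeIn_singleton {e : E} {u w : V} (h : G.IsLink e u w) (v : V) :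
    G.degreeIn {e} v = (if u = v then 1 else 0) + if w = v then 1 else 0 := by
  have hsep : ∀ p : E → Prop, {f ∈ ({e} : Set E) | p f}.ncard = if p e then 1 else 0 := by
    intro p
    have hite : {f ∈ ({e} : Set E) | p f} = if p e then {e} else ∅ := by
      ext f
      grind
    rw [hite, apply_ite Set.ncard, Set.ncard_singleton, Set.ncard_empty]
  rw [degreeIn, hsep, hsep]
  rcases h with ⟨rfl, rfl⟩ | ⟨rfl, rfl⟩
  · rfl
  · exact add_comm _ _

theorem degreeIn_union (hF : F.Finite) (hF' : F'.Finite) (h : Disjoint F F') (v : V) :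
    G.degreeIn (F ∪ F') v = G.degreeIn F v + G.degreeIn F' v := by
  have hsep : ∀ p : E → Prop,
      {e ∈ F ∪ F' | p e}.ncard = {e ∈ F | p e}.ncard + {e ∈ F' | p e}.ncard := by
    intro p
    rw [← Set.ncard_union_eq (h.mono (Set.sep_subset _ _) (Set.sep_subset _ _))
      (hF.subset (Set.sep_subset _ _)) (hF'.subset (Set.sep_subset _ _))]
    congr 1
    ext e
    exact or_and_right
  simp only [degreeIn, hsep]
  exact add_add_add_comm _ _ _ _

end Degree

section Paths

/-- There is a path from `a` to `b` with edge set `F` and vertex set `T`. Unlike the indexed paths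
of `IsPath`, this form lends itself to induction on the first edge and to replacing a walk by a
path. -/
inductive IsPathOn (G : Multigraph V E) : V → V → Set E → Set V → Prop
  | nil (a : V) : IsPathOn G a a ∅ {a}
  | cons {u a b : V} {e : E} {F : Set E} {T : Set V} (he : G.IsLink e u a) (hu : u ∉ T)
      (h : IsPathOn G a b F T) : IsPathOn G u b (insert e F) (insert u T)

variable {a b v : V} {F F' : Set E} {T T' W : Set V}

namespace IsPathOn

theorem left_mem (h : G.IsPathOn a b F T) : a ∈ T := by
  cases h <;> simp

theorem finite_edges (h : G.IsPathOn a b F T) : F.Finite := by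
  induction h with
  | nil => exact Set.finite_empty
  | cons _ _ _ ih => exact ih.insert _

theorem edges_nonempty (h : G.IsPathOn a b F T) (hab : a ≠ b) : F.Nonempty := by
  cases h with
  | nil => exact absurd rfl hab
  | cons => exact Set.insert_nonempty _ _

theorem mem_of_touches (h : G.IsPathOn a b F T) (hv : G.touches F v) : v ∈ T := by
  induction h with
  | nil => simp [touches] at hv
  | cons he _ h ih =>
    obtain ⟨f, rfl | hf, hfv⟩ := hv
    · rcases he.eq_or_eq hfv with rfl | rfl
      exacts [Or.inl rfl, Or.inr h.left_mem]
    · exact Or.inr (ih ⟨f, hf, hfv⟩)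

theorem eq_left_or_touches (h : G.IsPathOn a b F T) (hv : v ∈ T) : v = a ∨ G.touches F v := by
  induction h with
  | nil => exact Or.inl hv
  | cons he _ _ ih =>
    refine Or.imp_right (fun hv => ?_) hv
    rcases ih hv with rfl | ⟨f, hf, hfv⟩
    · exact ⟨_, Set.mem_insert _ _, he.symm.incident⟩
    · exact ⟨f, Set.mem_insert_of_mem _ hf, hfv⟩

theorem edges_subset_inducedEdges (h : G.IsPathOn a b F T) : F ⊆ G.inducedEdges T :=
  fun e he => ⟨h.mem_of_touches ⟨e, he, Or.inl rfl⟩, h.mem_of_touches ⟨e, he, Or.inr rfl⟩⟩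

/-- The two indicator terms make up for the ends, so that the formula also covers the one-vertex
path, whose single vertex has degree `0`. -/
theorem degreeIn_add_ends (h : G.IsPathOn a b F T) (v : V) :
    G.degreeIn F v + (if a = v then 1 else 0) + (if b = v then 1 else 0) =
      if v ∈ T then 2 else 0 := by
  induction h with
  | nil =>
    simp only [degreeIn_empty, Set.mem_singleton_iff]
    grind
  | @cons u a b e F T he hu h ih =>
    have heF : Disjoint {e} F := Set.disjoint_singleton_left.2 fun heF =>
      hu (h.mem_of_touches ⟨e, heF, he.incident⟩)
    rw [← Set.singleton_union, degreeIn_union (Set.finite_singleton e) h.finite_edges heF,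
      he.degreeIn_singleton]
    grind [h.left_mem]

theorem reaches (h : G.IsPathOn a b F T) (hv : v ∈ T) : G.Reaches (· ∈ F) a v := by
  induction h with
  | nil => cases hv; exact .refl
  | cons he _ _ ih =>
    rcases hv with rfl | hv
    · exact .refl
    · exact .head ⟨_, Set.mem_insert _ _, he⟩ ((ih hv).mono fun _ => Set.mem_insert_of_mem _)

theorem exists_suffix (h : G.IsPathOn a b F T) (hv : v ∈ T) :
    ∃ F' ⊆ F, ∃ T', G.IsPathOn v b F' T' := by
  induction h with
  | nil => cases hv; exact ⟨∅, subset_rfl, _, .nil _⟩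
  | cons he hu h ih =>
    rcases hv with rfl | hv
    · exact ⟨_, subset_rfl, _, .cons he hu h⟩
    · obtain ⟨F', hF', T', h'⟩ := ih hv
      exact ⟨F', hF'.trans (Set.subset_insert _ _), T', h'⟩

theorem isCycle_union (h : G.IsPathOn a b F T) (h' : G.IsPathOn a b F' T') (hab : a ≠ b)
    (hF : Disjoint F F') (hT : ∀ v ∈ T, v ∈ T' → v = a ∨ v = b) : G.IsCycle (F ∪ F') := by
  have hmem : ∀ v, G.touches (F ∪ F') v → v ∈ T ∨ v ∈ T' := by
    rintro v ⟨e, he | he, hv⟩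
    · exact Or.inl (h.mem_of_touches ⟨e, he, hv⟩)
    · exact Or.inr (h'.mem_of_touches ⟨e, he, hv⟩)
  have hreach : ∀ v, G.touches (F ∪ F') v → G.Reaches (· ∈ F ∪ F') a v := by
    intro v hv
    rcases hmem v hv with hv | hv
    · exact (h.reaches hv).mono fun _ => Or.inl
    · exact (h'.reaches hv).mono fun _ => Or.inr
  refine ⟨(h.edges_nonempty hab).inl, fun v hv => ?_,
    fun u v hu hv => (hreach u hu).symm.trans (hreach v hv)⟩
  change G.degreeIn (F ∪ F') v = 2
  rw [degreeIn_union h.finite_edges h'.finite_edges hF]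
  -- An end has degree 1 in both paths; any other vertex has degree 2 in one and 0 in the other.
  have hdeg := h.degreeIn_add_ends v
  have hdeg' := h'.degreeIn_add_ends v
  grind

end IsPathOn

theorem Reaches.exists_isPathOn {Q : Set E} (h : G.Reaches (· ∈ Q) a b) :
    ∃ F ⊆ Q, ∃ T, G.IsPathOn a b F T := by
  induction h using Relation.ReflTransGen.head_induction_on with
  | refl => exact ⟨∅, Set.empty_subset _, _, .nil b⟩
  | @head u a hua _ ih =>
    obtain ⟨F, hF, T, h⟩ := ih
    obtain ⟨e, he, hua⟩ := hua
    by_cases hu : u ∈ T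
    · obtain ⟨F', hF', T', h'⟩ := h.exists_suffix hu
      exact ⟨F', hF'.trans hF, T', h'⟩
    · exact ⟨_, Set.insert_subset he hF, _, .cons hua hu h⟩

theorem IsPath.isPathOn {n : ℕ} {vs : Fin (n + 1) → V} {es : Fin n → E} (h : G.IsPath vs es) :
    G.IsPathOn (vs 0) (vs (Fin.last n)) (Set.range es) (Set.range vs) := by
  induction n with
  | zero =>
    have hvs : Set.range vs = {vs 0} := by simp [Set.range_unique]
    rw [Set.range_eq_empty es, hvs]
    exact .nil _
  | succ n ih =>
    have htail : G.IsPath (Fin.tail vs) (Fin.tail es) :=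
      ⟨h.1.comp (Fin.succ_injective _), h.2.1.comp (Fin.succ_injective _), fun i => h.2.2 i.succ⟩
    rw [Fin.range_fin_succ es, Fin.range_fin_succ vs]
    refine .cons (h.2.2 0) ?_ (ih htail)
    rintro ⟨i, hi⟩
    exact Fin.succ_ne_zero i (h.1 hi)

theorem EdgeConnected.exists_peripheral_cycle [Finite E] (hG : G.EdgeConnected 3) {M : Set E}
    (hF : G.IsPathOn a b F T) (hab : a ≠ b) (hTW : T ⊆ W) (hper : G.ConnectedOn W fun e => e ∉ F)
    (hWM : G.inducedEdges Wᶜ ⊆ M) (hMW : Disjoint M (G.inducedEdges W))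
    (hM_ends : ∀ v ∈ W, G.touches M v → v = a ∨ v = b) (hlink : G.Reaches (· ∈ M) a b) :
    ∃ C, G.IsCycle C ∧ G.Peripheral C ∧ C ∩ G.inducedEdges W = F := by
  have hFW : F ⊆ G.inducedEdges W := hF.edges_subset_inducedEdges.trans (inducedEdges_mono hTW)
  obtain ⟨Q, hQM, hQ, hQper⟩ :=
    hG.exists_peripheral_link (hTW hF.left_mem) hFW hper hWM hMW hlink
  obtain ⟨F', hF'Q, T', hF'⟩ := hQ.exists_isPathOn
  have hF'W : Disjoint F' (G.inducedEdges W) := hMW.mono_left (hF'Q.trans hQM)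
  refine ⟨F ∪ F', hF.isCycle_union hF' hab (hF'W.mono_right hFW).symm fun v hvT hvT' => ?_,
    hQper.subset (Set.union_subset_union_right F hF'Q), ?_⟩
  · rcases hF'.eq_left_or_touches hvT' with hva | ⟨e, he, hev⟩
    · exact Or.inl hva
    · exact hM_ends v (hTW hvT) ⟨e, hQM (hF'Q he), hev⟩
  · rw [Set.union_inter_distrib_right, hF'W.inter_eq, Set.union_empty,
      Set.inter_eq_left.2 hFW]

end Paths

end Multigraph

theorem peripheral_cycle_extension_general {V E : Type} [Finite E] {G : Multigraph V E}
    (hG : G.EdgeConnected 3) {X W : Set V} (hXconn : G.ConnectedOn X fun _ => True)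
    (hWX : Disjoint W X) {n : ℕ} {vs : Fin (n + 1 + 1) → V} {es : Fin (n + 1) → E}
    (hP : G.IsPath vs es) (hPW : ∀ i, vs i ∈ W)
    (hper : G.ConnectedOn W (fun e => e ∉ Set.range es))
    (hy₁ : ∃ e : E, G.joins e (vs 0) X)
    (hy₂ : ∃ e : E, G.joins e (vs (Fin.last (n + 1))) X) :
    ∃ C : Set E, G.IsCycle C ∧ G.Peripheral C ∧
      C ∩ {e : E | G.src e ∈ W ∧ G.tgt e ∈ W} = Set.range es := by
  obtain ⟨e₁, he₁⟩ := hy₁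
  obtain ⟨e₂, he₂⟩ := hy₂
  have hMW : Disjoint ({e₁, e₂} ∪ G.inducedEdges Wᶜ) (G.inducedEdges W) := by
    refine Set.disjoint_left.2 ?_
    rintro e ((rfl | rfl) | he)
    exacts [he₁.notMem_inducedEdges hWX, he₂.notMem_inducedEdges hWX, fun he' => he.1 he'.1]
  have hM_ends : ∀ v ∈ W, G.touches ({e₁, e₂} ∪ G.inducedEdges Wᶜ) v →
      v = vs 0 ∨ v = vs (Fin.last (n + 1)) := by
    rintro v hvW ⟨e, (rfl | rfl) | he, hv⟩
    exacts [Or.inl (he₁.eq_of_incident hWX hvW hv), Or.inr (he₂.eq_of_incident hWX hvW hv),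
      absurd hvW (Multigraph.notMem_of_incident_of_mem_inducedEdges_compl hv he)]
  have hlink : G.Reaches (· ∈ {e₁, e₂} ∪ G.inducedEdges Wᶜ) (vs 0) (vs (Fin.last (n + 1))) :=
    (Multigraph.reaches_of_joins hXconn he₁ he₂).mono fun _ =>
      Or.imp_right fun he => Multigraph.inducedEdges_mono hWX.subset_compl_left he
  exact hG.exists_peripheral_cycle hP.isPathOn (fun h => Fin.last_pos.ne (hP.1 h))
    (Set.range_subset_iff.2 hPW) hper Set.subset_union_right hMW hM_ends hlink

/-- Let `G` be a 3-edge-connected cubic graph, `X ⊆ V` with `G[X]` connected, `H` a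
component of `G − X` (vertex set `W`), and `P ⊆ H` a nontrivial path with ends
`y₁ = vs 0`, `y₂ = vs (last (n+1))` that is peripheral in `H`, whose ends each send an
edge to `X` and whose other vertices send no edge to `X`. Then there is a peripheral
cycle `C` of `G` with `C ∩ H = P`. -/
theorem peripheral_cycle_extension {V E : Type} [Fintype V] [Fintype E]
    (G : Multigraph V E) (hG : G.EdgeConnected 3) (hcubic : G.Cubic)
    (X : Set V) (hXne : X.Nonempty) (hXconn : G.ConnectedOn X fun _ => True)
    (W : Set V) (hW : G.IsComponent X W)
    (n : ℕ) (vs : Fin (n + 1 + 1) → V) (es : Fin (n + 1) → E)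
    (hP : G.IsPath vs es) (hPW : ∀ i, vs i ∈ W)
    (hper : G.ConnectedOn W (fun e => e ∉ Set.range es))
    (hy₁ : ∃ e : E, G.joins e (vs 0) X)
    (hy₂ : ∃ e : E, G.joins e (vs (Fin.last (n + 1))) X)
    (hmid : ∀ i : Fin (n + 1 + 1), i ≠ 0 → i ≠ Fin.last (n + 1) →
      ∀ e : E, ¬ G.joins e (vs i) X) :
    ∃ C : Set E, G.IsCycle C ∧ G.Peripheral C ∧
      C ∩ {e : E | G.src e ∈ W ∧ G.tgt e ∈ W} = Set.range es :=
  peripheral_cycle_extension_general hG hXconn hW.2.1 hP hPW hper hy₁ hy₂
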